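/- Let G be a nonlocal game and G^proj its projection game, in which Alice receives a pair of questions (x,y) sampled from π and answers with a pair (a,b), while Bob receives one of x or y uniformly at random and answers with a single answer c; they win iff D(x,y,a,b) = 1 and c agrees with the corresponding coordinate of Alice's answer. Then the quantum value satisfies ω_q(G^proj) ≤ √((1 + ω_q(G))/2). -/

import Mathlib

open Matrix
open scoped ComplexOrder

/-- A (two-player, one-round) nonlocal game: a distribution on question pairs together with
a decision predicate. -/
structure NonlocalGame (IA IB OA OB : Type) where
  prob : IA → IB → ℝ
  D : IA → IB → OA → OB → Bool

/-- `p` is a probability distribution on question pairs. -/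
def IsDist {IA IB : Type} [Fintype IA] [Fintype IB] (p : IA → IB → ℝ) : Prop :=
  (∀ x y, 0 ≤ p x y) ∧ ∑ x, ∑ y, p x y = 1

/-- A POVM: positive semidefinite operators summing to the identity. -/
def IsPOVM {d : ℕ} {O : Type} [Fintype O] (A : O → Matrix (Fin d) (Fin d) ℂ) : Prop :=
  (∀ a, (A a).PosSemidef) ∧ ∑ a, A a = 1

/-- The winning probability of the quantum strategy given by POVMs `A`, `B` and the shared
state with coefficient matrix `M` (so that `⟨ψ|A⊗B|ψ⟩ = Tr(Mᴴ A M Bᵀ)`). -/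
noncomputable def winProb {IA IB OA OB : Type}
    [Fintype IA] [Fintype IB] [Fintype OA] [Fintype OB]
    (G : NonlocalGame IA IB OA OB) {dA dB : ℕ}
    (A : IA → OA → Matrix (Fin dA) (Fin dA) ℂ)
    (B : IB → OB → Matrix (Fin dB) (Fin dB) ℂ)
    (M : Matrix (Fin dA) (Fin dB) ℂ) : ℝ :=
  ∑ x, ∑ y, G.prob x y *
    ∑ a, ∑ b, if G.D x y a b then (Mᴴ * A x a * M * (B y b)ᵀ).trace.re else 0

/-- The quantum value `ω_q(G)`: the supremum of winning probabilities over all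
finite-dimensional quantum strategies. -/
noncomputable def qValue {IA IB OA OB : Type}
    [Fintype IA] [Fintype IB] [Fintype OA] [Fintype OB]
    (G : NonlocalGame IA IB OA OB) : ℝ :=
  sSup { w : ℝ | ∃ (dA dB : ℕ) (A : IA → OA → Matrix (Fin dA) (Fin dA) ℂ)
    (B : IB → OB → Matrix (Fin dB) (Fin dB) ℂ) (M : Matrix (Fin dA) (Fin dB) ℂ),
    (∀ x, IsPOVM (A x)) ∧ (∀ y, IsPOVM (B y)) ∧ (Mᴴ * M).trace = 1 ∧
    w = winProb G A B M }

/-- The projection game `G^proj`: Alice gets a pair `(x,y) ∼ π` and answers with a pair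
`(a,b)`; Bob gets one of the two questions, chosen uniformly (together with a flag saying
which coordinate), and answers with a single answer `c`; they win iff `D(x,y,a,b) = 1` and
`c` agrees with the corresponding coordinate of Alice's answer. -/
noncomputable def projGame {I O : Type} [DecidableEq I] [DecidableEq O]
    (G : NonlocalGame I I O O) : NonlocalGame (I × I) (I × Bool) (O × O) O where
  prob := fun q z =>
    if z.1 = (if z.2 then q.2 else q.1) then G.prob q.1 q.2 / 2 else 0
  D := fun q z a c =>
    G.D q.1 q.2 a.1 a.2 && decide (z.1 = if z.2 then q.2 else q.1) &&
      decide (c = if z.2 then a.2 else a.1)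

/-!
Let `w` be the winning probability of a strategy for `G^proj` on a fixed question pair. In `G`, let
both players use Bob's two measurements `P`, `Q` on the canonical purification `σ = √ρ` of Bob's
reduced state `ρ`, and let `v` be the resulting winning probability. Alice's accepted answers split
off an ensemble `∑ N a b ≤ σ²` of Bob's state, and `2 w = ∑ Re Tr((P a + Q b) N a b)`.

Solving the Lyapunov equation `N a b = (σ X a b + X a b σ) / 2` linearizes the square: the `X a b`
are positive semidefinite with sum at most `σ`, and `Re Tr(P N) = Re Tr(P σ X)`. By
inclusion–exclusion, the amplitudes for "Bob agrees on the first answer" and "Bob agrees on the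
second answer" add up to those for "he agrees on both", carried by `X a b`, and "he agrees on at
least one", carried by `∑ b', X a b' + ∑ a', X a' b - X a b`. Only the first family vanishes outside
the accepted answers, so by Cauchy–Schwarz the two amplitudes are at most `√v` and `1` times the
norms of the families, whose squares total at most `2`. Hence `2 w ≤ √(2 (1 + v))`, and averaging
over the questions is Jensen's inequality for the square.
-/

section TraceForm
variable {𝕜 n ι : Type*} [RCLike 𝕜] [Fintype n]

/-- The real bilinear form `(X, Y) ↦ Re Tr(P X Q Y)` attached to matrices `P` and `Q`. Reading
Hermitian matrices as bipartite vectors, it is `⟨X| P ⊗ Qᵀ |Y⟩`, the form by which a pair of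
measurement operators acts on a shared state. -/
noncomputable def traceForm (P Q : Matrix n n 𝕜) : LinearMap.BilinForm ℝ (Matrix n n 𝕜) :=
  ((LinearMap.mul ℝ (Matrix n n 𝕜)).compr₂ (RCLike.reLm ∘ₗ traceLinearMap n ℝ 𝕜)).compl₁₂
    (LinearMap.mulLeft ℝ P) (LinearMap.mulLeft ℝ Q)

variable {P Q X Y : Matrix n n 𝕜}

theorem traceForm_apply (P Q X Y : Matrix n n 𝕜) :
    traceForm P Q X Y = RCLike.re (P * X * (Q * Y)).trace := rfl

theorem traceForm_swap (P Q X Y : Matrix n n 𝕜) : traceForm P Q X Y = traceForm X Y Q P := by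
  simp only [traceForm_apply, Matrix.mul_assoc, trace_mul_comm P]

theorem traceForm_comm (P Q X Y : Matrix n n 𝕜) : traceForm P Q X Y = traceForm Q P Y X := by
  rw [traceForm_apply, traceForm_apply, trace_mul_comm]

theorem traceForm_symm (hP : P.IsHermitian) (hQ : Q.IsHermitian) (hX : X.IsHermitian)
    (hY : Y.IsHermitian) : traceForm P Q X Y = traceForm P Q Y X := by
  have h : Y * Q * (X * P) = (P * X * (Q * Y))ᴴ := by
    simp only [conjTranspose_mul, hP.eq, hQ.eq, hX.eq, hY.eq, Matrix.mul_assoc]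
  rw [traceForm_swap P Q Y X, traceForm_apply, traceForm_apply, h, trace_conjTranspose,
    RCLike.star_def, RCLike.conj_re]

theorem traceForm_sum_left [Fintype ι] (P : ι → Matrix n n 𝕜) (Q X Y : Matrix n n 𝕜) :
    traceForm (∑ i, P i) Q X Y = ∑ i, traceForm (P i) Q X Y := by
  simp only [traceForm_swap _ Q X Y, map_sum]

theorem traceForm_sum_right [Fintype ι] (P : Matrix n n 𝕜) (Q : ι → Matrix n n 𝕜)
    (X Y : Matrix n n 𝕜) : traceForm P (∑ i, Q i) X Y = ∑ i, traceForm P (Q i) X Y := by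
  simp only [traceForm_swap P _ X Y, map_sum, LinearMap.sum_apply]

open scoped MatrixOrder in
theorem re_trace_mul_nonneg (hX : X.PosSemidef) (hY : Y.PosSemidef) :
    0 ≤ RCLike.re (X * Y).trace := by
  classical
  obtain ⟨C, rfl⟩ := CStarAlgebra.nonneg_iff_eq_star_mul_self.mp hX.nonneg
  rw [Matrix.mul_assoc, trace_mul_comm]
  exact (RCLike.nonneg_iff.mp (hY.mul_mul_conjTranspose_same C).trace_nonneg).1

theorem traceForm_self_nonneg (hP : P.PosSemidef) (hQ : Q.PosSemidef) (hX : X.IsHermitian) :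
    0 ≤ traceForm P Q X X := by
  have h : (X * Q * X).PosSemidef := by simpa only [hX.eq] using hQ.mul_mul_conjTranspose_same X
  simpa only [traceForm_apply, Matrix.mul_assoc] using re_trace_mul_nonneg hP h

/-- Cauchy–Schwarz for `traceForm P Q`, linearized in the parameter `μ`. -/
theorem two_mul_traceForm_le (hP : P.PosSemidef) (hQ : Q.PosSemidef) (hX : X.IsHermitian)
    (hY : Y.IsHermitian) (μ : ℝ) :
    2 * μ * traceForm P Q X Y ≤ traceForm P Q X X + μ ^ 2 * traceForm P Q Y Y := by
  have h := traceForm_self_nonneg hP hQ (hX.sub (hY.smul (IsSelfAdjoint.all μ)))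
  simp only [map_sub, map_smul, LinearMap.sub_apply, LinearMap.smul_apply, smul_eq_mul,
    traceForm_symm hP.1 hQ.1 hY hX] at h
  linarith

open scoped MatrixOrder

theorem traceForm_self_mono (hP : P.PosSemidef) (hX : X.PosSemidef) (hXY : X ≤ Y) :
    traceForm P P X X ≤ traceForm P P Y Y := by
  have hY : Y.PosSemidef := (hX.nonneg.trans hXY).posSemidef
  have h₁ := traceForm_self_nonneg hX (le_iff.mp hXY) hP.1
  have h₂ := traceForm_self_nonneg hY (le_iff.mp hXY) hP.1
  rw [← traceForm_swap, map_sub] at h₁ h₂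
  linarith [traceForm_comm P P X Y]

theorem sum_traceForm_self_le [Fintype ι] {P : ι → Matrix n n 𝕜} (hP : ∀ i, (P i).PosSemidef)
    (hX : X.IsHermitian) :
    ∑ i, traceForm (P i) (P i) X X ≤ traceForm (∑ i, P i) (∑ i, P i) X X := by
  rw [traceForm_sum_left]
  gcongr with i
  have hle : P i ≤ ∑ j, P j :=
    Finset.single_le_sum (fun j _ => (hP j).nonneg) (Finset.mem_univ i)
  have h := traceForm_self_nonneg (hP i) (le_iff.mp hle) hX
  rw [traceForm_swap (P i), traceForm_swap (P i) (∑ j, P j)]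
  rwa [traceForm_swap, map_sub, LinearMap.sub_apply, sub_nonneg] at h

end TraceForm

section InclusionExclusion
open scoped MatrixOrder
variable {𝕜 n α β : Type*} [RCLike 𝕜] [Fintype n]

theorem traceForm_inclusion_exclusion_le {P Q X R S : Matrix n n 𝕜} (hP : P.IsHermitian)
    (hQ : Q.IsHermitian) (hX : X.PosSemidef) (hR : X ≤ R) (hS : X ≤ S) :
    traceForm P Q X X + traceForm P Q (R + S - X) (R + S - X) ≤
      (traceForm P Q R R + traceForm P P R (S - X)) +
        (traceForm P Q S S + traceForm Q Q S (R - X)) := by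
  obtain ⟨Y, rfl⟩ : ∃ Y, R = X + Y := ⟨R - X, (add_sub_cancel X R).symm⟩
  obtain ⟨Z, rfl⟩ : ∃ Z, S = X + Z := ⟨S - X, (add_sub_cancel X S).symm⟩
  have hY : Y.PosSemidef := by simpa using le_iff.mp hR
  have hZ : Z.PosSemidef := by simpa using le_iff.mp hS
  have hYZ : 0 ≤ traceForm Y Z (P - Q) (P - Q) := traceForm_self_nonneg hY hZ (hP.sub hQ)
  have hXZ : 0 ≤ traceForm P P X Z := by
    simpa only [← traceForm_swap] using traceForm_self_nonneg hX hZ hP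
  have hXY : 0 ≤ traceForm Q Q X Y := by
    simpa only [← traceForm_swap] using traceForm_self_nonneg hX hY hQ
  have hsum : X + Y + (X + Z) - X = X + Y + Z := by abel
  simp only [hsum, add_sub_cancel_left, map_add, map_sub, LinearMap.add_apply,
    LinearMap.sub_apply, ← traceForm_swap] at hYZ ⊢
  linarith [traceForm_symm hP hQ hX.1 hY.1, traceForm_symm hP hQ hX.1 hZ.1,
    traceForm_symm hP hQ hY.1 hZ.1, traceForm_comm Q P Y Z, traceForm_comm Q Q Y Z]

variable [DecidableEq n] [Fintype α] [Fintype β]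

theorem sum_traceForm_marginal_le {P X : α → Matrix n n 𝕜} {τ : Matrix n n 𝕜}
    (hP : ∀ a, (P a).PosSemidef) (hP1 : ∑ a, P a = 1) (hX : ∀ a, (X a).PosSemidef)
    (hτ : ∑ a, X a = τ) :
    ∑ a, (traceForm (P a) 1 (X a) (X a) + traceForm (P a) (P a) (X a) (τ - X a)) ≤
      traceForm 1 1 τ τ := by
  have hτ' : τ.IsHermitian := hτ ▸ (posSemidef_sum _ fun a _ => hX a).1
  have hterm (a : α) :
      2 * (traceForm (P a) 1 (X a) (X a) + traceForm (P a) (P a) (X a) (τ - X a)) ≤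
        traceForm (X a) (X a) 1 1 + traceForm (P a) (P a) τ τ := by
    have h₁ := traceForm_self_nonneg (hX a) (hX a) (isHermitian_one.sub (hP a).1)
    have h₂ := traceForm_self_nonneg (hP a) (hP a) (hτ'.sub (hX a).1)
    simp only [map_sub, LinearMap.sub_apply] at h₁ h₂ ⊢
    linarith [traceForm_swap (P a) 1 (X a) (X a), traceForm_comm (X a) (X a) 1 (P a),
      traceForm_swap (P a) (P a) (X a) (X a), traceForm_comm (P a) (P a) τ (X a)]
  have hX2 : ∑ a, traceForm (X a) (X a) 1 1 ≤ traceForm 1 1 τ τ := by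
    simpa only [hτ, traceForm_swap τ] using sum_traceForm_self_le hX isHermitian_one
  have hP2 : ∑ a, traceForm (P a) (P a) τ τ ≤ traceForm 1 1 τ τ := by
    simpa only [hP1] using sum_traceForm_self_le hP hτ'
  have hsum := Finset.sum_le_sum fun a (_ : a ∈ Finset.univ) => hterm a
  rw [← Finset.mul_sum, Finset.sum_add_distrib (g := fun a => traceForm _ _ τ τ)] at hsum
  linarith

theorem sum_traceForm_inclusion_exclusion_le {P : α → Matrix n n 𝕜} {Q : β → Matrix n n 𝕜}
    {X : α → β → Matrix n n 𝕜} {τ : Matrix n n 𝕜}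
    (hP : ∀ a, (P a).PosSemidef) (hP1 : ∑ a, P a = 1)
    (hQ : ∀ b, (Q b).PosSemidef) (hQ1 : ∑ b, Q b = 1)
    (hX : ∀ a b, (X a b).PosSemidef) (hτ : ∑ a, ∑ b, X a b = τ) :
    ∑ a, ∑ b, (traceForm (P a) (Q b) (X a b) (X a b) +
        traceForm (P a) (Q b) (∑ b', X a b' + ∑ a', X a' b - X a b)
          (∑ b', X a b' + ∑ a', X a' b - X a b)) ≤
      2 * traceForm 1 1 τ τ := by
  set R : α → Matrix n n 𝕜 := fun a => ∑ b, X a b with hR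
  set S : β → Matrix n n 𝕜 := fun b => ∑ a, X a b with hS
  have hRτ : ∑ a, R a = τ := hτ
  have hSτ : ∑ b, S b = τ := by rw [← hτ, hS, hR, Finset.sum_comm]
  have hXR (a : α) (b : β) : X a b ≤ R a :=
    Finset.single_le_sum (fun b' _ => (hX a b').nonneg) (Finset.mem_univ b)
  have hXS (a : α) (b : β) : X a b ≤ S b :=
    Finset.single_le_sum (f := fun a' => X a' b) (fun a' _ => (hX a' b).nonneg)
      (Finset.mem_univ a)
  have hrow : ∑ a, ∑ b, (traceForm (P a) (Q b) (R a) (R a) +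
      traceForm (P a) (P a) (R a) (S b - X a b)) ≤ traceForm 1 1 τ τ := by
    have h := sum_traceForm_marginal_le hP hP1 (fun a => posSemidef_sum _ fun b _ => hX a b) hRτ
    simpa only [Finset.sum_add_distrib (s := (Finset.univ : Finset β)), ← traceForm_sum_right,
      hQ1, ← map_sum, Finset.sum_sub_distrib, hSτ] using h
  have hcol : ∑ a, ∑ b, (traceForm (P a) (Q b) (S b) (S b) +
      traceForm (Q b) (Q b) (S b) (R a - X a b)) ≤ traceForm 1 1 τ τ := by
    have h := sum_traceForm_marginal_le hQ hQ1 (fun b => posSemidef_sum _ fun a _ => hX a b) hSτ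
    rw [Finset.sum_comm]
    simpa only [Finset.sum_add_distrib (s := (Finset.univ : Finset α)), ← traceForm_sum_left,
      hP1, ← map_sum, Finset.sum_sub_distrib, hRτ, traceForm_comm _ 1] using h
  calc _ ≤ ∑ a, ∑ b, ((traceForm (P a) (Q b) (R a) (R a) +
          traceForm (P a) (P a) (R a) (S b - X a b)) + (traceForm (P a) (Q b) (S b) (S b) +
            traceForm (Q b) (Q b) (S b) (R a - X a b))) :=
        Finset.sum_le_sum fun a _ => Finset.sum_le_sum fun b _ =>
          traceForm_inclusion_exclusion_le (hP a).1 (hQ b).1 (hX a b) (hXR a b) (hXS a b)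
    _ ≤ _ := by
        rw [two_mul]
        simpa only [Finset.sum_add_distrib] using add_le_add hrow hcol

theorem sum_traceForm_marginal_eq {P : α → Matrix n n 𝕜} {Q : β → Matrix n n 𝕜}
    (hP1 : ∑ a, P a = 1) (hQ1 : ∑ b, Q b = 1) (X : α → β → Matrix n n 𝕜) (σ : Matrix n n 𝕜) :
    ∑ a, ∑ b, (traceForm (P a) 1 σ (X a b) + traceForm 1 (Q b) σ (X a b)) =
      ∑ a, ∑ b, (traceForm (P a) (Q b) σ (X a b) +
        traceForm (P a) (Q b) σ (∑ b', X a b' + ∑ a', X a' b - X a b)) := by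
  have hrow : ∑ a, ∑ b, traceForm (P a) (Q b) σ (∑ b', X a b') =
      ∑ a, ∑ b, traceForm (P a) 1 σ (X a b) := by
    simp only [← map_sum, ← traceForm_sum_right, hQ1]
  have hcol : ∑ a, ∑ b, traceForm (P a) (Q b) σ (∑ a', X a' b) =
      ∑ a, ∑ b, traceForm 1 (Q b) σ (X a b) := by
    rw [Finset.sum_comm, Finset.sum_comm (f := fun a b => traceForm 1 (Q b) σ (X a b))]
    simp only [← map_sum, ← traceForm_sum_left, hP1]
  simp only [map_sub, map_add, add_sub_cancel, Finset.sum_add_distrib (s := Finset.univ),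
    hrow, hcol]

/-- Linearized Cauchy–Schwarz against the two families of `sum_traceForm_marginal_eq`, whose
squared norms `sum_traceForm_inclusion_exclusion_le` bounds together. -/
theorem two_mul_sum_traceForm_marginal_le {P : α → Matrix n n 𝕜} {Q : β → Matrix n n 𝕜}
    {X : α → β → Matrix n n 𝕜} {σ : Matrix n n 𝕜} {D : α → β → Prop} [∀ a b, Decidable (D a b)]
    (hP : ∀ a, (P a).PosSemidef) (hP1 : ∑ a, P a = 1)
    (hQ : ∀ b, (Q b).PosSemidef) (hQ1 : ∑ b, Q b = 1)
    (hX : ∀ a b, (X a b).PosSemidef) (hXD : ∀ a b, ¬ D a b → X a b = 0)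
    (hσ : σ.IsHermitian) (μ : ℝ) :
    2 * μ * ∑ a, ∑ b, (traceForm (P a) 1 σ (X a b) + traceForm 1 (Q b) σ (X a b)) ≤
      ∑ a, ∑ b, (if D a b then traceForm (P a) (Q b) σ σ else 0) + traceForm 1 1 σ σ +
        μ ^ 2 * (2 * traceForm 1 1 (∑ a, ∑ b, X a b) (∑ a, ∑ b, X a b)) := by
  let W (a : α) (b : β) : Matrix n n 𝕜 := ∑ b', X a b' + ∑ a', X a' b - X a b
  have hW (a : α) (b : β) : (W a b).IsHermitian :=
    ((posSemidef_sum _ fun b _ => hX a b).1.add (posSemidef_sum _ fun a _ => hX a b).1).sub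
      (hX a b).1
  have hboth (a : α) (b : β) : 2 * μ * traceForm (P a) (Q b) σ (X a b) ≤
      (if D a b then traceForm (P a) (Q b) σ σ else 0) +
        μ ^ 2 * traceForm (P a) (Q b) (X a b) (X a b) := by
    split_ifs with h
    · exact two_mul_traceForm_le (hP a) (hQ b) hσ (hX a b).1 μ
    · simp [hXD a b h]
  have hone (a : α) (b : β) : 2 * μ * traceForm (P a) (Q b) σ (W a b) ≤
      traceForm (P a) (Q b) σ σ + μ ^ 2 * traceForm (P a) (Q b) (W a b) (W a b) :=
    two_mul_traceForm_le (hP a) (hQ b) hσ (hW a b) μ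
  have hσ1 : ∑ a, ∑ b, traceForm (P a) (Q b) σ σ = traceForm 1 1 σ σ := by
    simp only [← traceForm_sum_right, hQ1, ← traceForm_sum_left, hP1]
  have hXW : ∑ a, ∑ b, (traceForm (P a) (Q b) (X a b) (X a b) +
      traceForm (P a) (Q b) (W a b) (W a b)) ≤ _ :=
    sum_traceForm_inclusion_exclusion_le hP hP1 hQ hQ1 hX rfl
  calc _ = ∑ a, ∑ b, (2 * μ * traceForm (P a) (Q b) σ (X a b) +
          2 * μ * traceForm (P a) (Q b) σ (W a b)) := by
        simp only [sum_traceForm_marginal_eq hP1 hQ1, W, Finset.mul_sum, mul_add]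
    _ ≤ ∑ a, ∑ b, (((if D a b then traceForm (P a) (Q b) σ σ else 0) +
          traceForm (P a) (Q b) σ σ) + μ ^ 2 * (traceForm (P a) (Q b) (X a b) (X a b) +
            traceForm (P a) (Q b) (W a b) (W a b))) :=
        Finset.sum_le_sum fun a _ => Finset.sum_le_sum fun b _ => by
          linarith [hboth a b, hone a b]
    _ = ∑ a, ∑ b, (if D a b then traceForm (P a) (Q b) σ σ else 0) + traceForm 1 1 σ σ +
          μ ^ 2 * ∑ a, ∑ b, (traceForm (P a) (Q b) (X a b) (X a b) +
            traceForm (P a) (Q b) (W a b) (W a b)) := by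
        rw [← hσ1]
        simp only [Finset.sum_add_distrib, ← Finset.mul_sum]
    _ ≤ _ := by gcongr

end InclusionExclusion

section JordanProduct
open scoped MatrixOrder
variable {𝕜 n ι : Type*} [RCLike 𝕜] [Fintype n] {σ N P X : Matrix n n 𝕜}

/-- The Jordan product `X ↦ (σX + Xσ) / 2` by `σ`; solving `jordanMul σ X = N` for `X` is solving a
Lyapunov equation. -/
noncomputable def jordanMul (σ : Matrix n n 𝕜) : Matrix n n 𝕜 →ₗ[ℝ] Matrix n n 𝕜 :=
  (2⁻¹ : ℝ) • (LinearMap.mulLeft ℝ σ + LinearMap.mulRight ℝ σ)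

/-- The real subspace of Hermitian matrices supported on the range of `σ`, expressed as the kernel
condition `ker σ ≤ ker X`. `jordanMul σ` is invertible on it when `σ` is positive semidefinite. -/
def supportedHermitian (σ : Matrix n n 𝕜) : Submodule ℝ (Matrix n n 𝕜) where
  carrier := {X | X.IsHermitian ∧ ∀ v, σ *ᵥ v = 0 → X *ᵥ v = 0}
  add_mem' hX hY := ⟨hX.1.add hY.1, fun v hv => by rw [add_mulVec, hX.2 v hv, hY.2 v hv, add_zero]⟩
  zero_mem' := ⟨isHermitian_zero, fun v _ => zero_mulVec v⟩
  smul_mem' c _ hX := ⟨hX.1.smul (IsSelfAdjoint.all c), fun v hv => by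
    rw [smul_mulVec, hX.2 v hv, smul_zero]⟩

theorem jordanMul_apply (σ X : Matrix n n 𝕜) :
    jordanMul σ X = (2⁻¹ : ℝ) • (σ * X + X * σ) := rfl

theorem jordanMul_self (σ : Matrix n n 𝕜) : jordanMul σ σ = σ * σ := by
  rw [jordanMul_apply, ← two_smul ℝ, smul_smul, inv_mul_cancel₀ two_ne_zero, one_smul]

theorem self_mem_supportedHermitian (hσ : σ.IsHermitian) : σ ∈ supportedHermitian σ :=
  ⟨hσ, fun _ hv => hv⟩

theorem jordanMul_mem_supportedHermitian (hσ : σ.IsHermitian) (hX : X ∈ supportedHermitian σ) :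
    jordanMul σ X ∈ supportedHermitian σ := by
  constructor
  · rw [jordanMul_apply]
    refine IsHermitian.smul ?_ (IsSelfAdjoint.all _)
    rw [IsHermitian, conjTranspose_add, conjTranspose_mul, conjTranspose_mul, hσ.eq, hX.1.eq,
      add_comm]
  · intro v hv
    simp only [jordanMul_apply, smul_mulVec, add_mulVec, ← mulVec_mulVec, hv, hX.2 v hv,
      mulVec_zero, add_zero, smul_zero]

theorem mem_supportedHermitian_of_le_mul_self (hN : N.PosSemidef)
    (h : N ≤ σ * σ) : N ∈ supportedHermitian σ := by
  refine ⟨hN.1, fun v hv => ?_⟩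
  have hle := (le_iff.mp h).dotProduct_mulVec_nonneg v
  rw [sub_mulVec, ← mulVec_mulVec, hv, mulVec_zero, zero_sub, dotProduct_neg, neg_nonneg] at hle
  exact (hN.dotProduct_mulVec_zero_iff v).mp (hle.antisymm (hN.dotProduct_mulVec_nonneg v))

theorem dotProduct_jordanMul_mulVec (hX : X.IsHermitian) {c : ℝ} {v : n → 𝕜}
    (hv : X *ᵥ v = c • v) : star v ⬝ᵥ jordanMul σ X *ᵥ v = c • (star v ⬝ᵥ σ *ᵥ v) := by
  have hv' : star v ᵥ* X = c • star v := by
    rw [← hX.eq, ← star_mulVec, hv, star_smul, star_trivial]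
  rw [jordanMul_apply, smul_mulVec, add_mulVec, ← mulVec_mulVec, ← mulVec_mulVec, hv,
    dotProduct_smul, dotProduct_add, dotProduct_mulVec _ X, hv', mulVec_smul, dotProduct_smul,
    smul_dotProduct, ← two_smul ℝ, smul_smul, inv_mul_cancel₀ two_ne_zero, one_smul]

/-- An eigenvector `v` of `X` with a negative eigenvalue would satisfy `⟨v, σv⟩ ≤ 0`, hence
`σv = 0`, hence `Xv = 0`. -/
theorem posSemidef_of_posSemidef_jordanMul (hσ : σ.PosSemidef) (hX : X ∈ supportedHermitian σ)
    (h : (jordanMul σ X).PosSemidef) : X.PosSemidef := by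
  classical
  refine hX.1.posSemidef_iff_eigenvalues_nonneg.mpr fun i => ?_
  by_contra! hneg
  set c := hX.1.eigenvalues i
  set v : n → 𝕜 := (hX.1.eigenvectorBasis i).ofLp
  have hv : X *ᵥ v = c • v := hX.1.mulVec_eigenvectorBasis i
  have hv0 : v ≠ 0 := fun h0 =>
    hX.1.eigenvectorBasis.toBasis.ne_zero i (by ext j; simpa using congrFun h0 j)
  have hnonneg : 0 ≤ c • (star v ⬝ᵥ σ *ᵥ v) := by
    simpa only [dotProduct_jordanMul_mulVec hX.1 hv] using h.dotProduct_mulVec_nonneg v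
  have hσv : σ *ᵥ v = 0 := by
    have hnonpos : star v ⬝ᵥ σ *ᵥ v ≤ 0 :=
      nonpos_of_smul_nonpos_of_pos_left (by rwa [neg_smul, neg_nonpos]) (neg_pos.mpr hneg)
    exact (hσ.dotProduct_mulVec_zero_iff v).mp (hnonpos.antisymm (hσ.dotProduct_mulVec_nonneg v))
  exact smul_ne_zero hneg.ne hv0 (hv ▸ hX.2 v hσv)

theorem injOn_jordanMul (hσ : σ.PosSemidef) :
    Set.InjOn (jordanMul σ) (supportedHermitian σ) := by
  intro X hX Y hY hXY
  have hle {X Y : Matrix n n 𝕜} (hX : X ∈ supportedHermitian σ) (hY : Y ∈ supportedHermitian σ)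
      (hXY : jordanMul σ X = jordanMul σ Y) : X ≤ Y := by
    refine le_iff.mpr (posSemidef_of_posSemidef_jordanMul hσ (Submodule.sub_mem _ hY hX) ?_)
    simpa only [map_sub, hXY, sub_self] using PosSemidef.zero
  exact (hle hX hY hXY).antisymm (hle hY hX hXY.symm)

theorem surjOn_jordanMul (hσ : σ.PosSemidef) :
    Set.SurjOn (jordanMul σ) (supportedHermitian σ) (supportedHermitian σ) :=
  (LinearMap.injOn_iff_surjOn fun _ => jordanMul_mem_supportedHermitian hσ.1).mp
    (injOn_jordanMul hσ)

theorem exists_posSemidef_jordanMul_eq [Fintype ι] {N : ι → Matrix n n 𝕜} (hσ : σ.PosSemidef)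
    (hN : ∀ i, (N i).PosSemidef) (h : ∑ i, N i ≤ σ * σ) :
    ∃ X : ι → Matrix n n 𝕜, (∀ i, (X i).PosSemidef) ∧ ∑ i, X i ≤ σ ∧
      (∀ i, jordanMul σ (X i) = N i) ∧ ∀ i, N i = 0 → X i = 0 := by
  have hmem (i : ι) : N i ∈ supportedHermitian σ :=
    mem_supportedHermitian_of_le_mul_self (hN i) <|
      (Finset.single_le_sum (fun j _ => (hN j).nonneg) (Finset.mem_univ i)).trans h
  choose X hX hXN using fun i => surjOn_jordanMul hσ (hmem i)
  refine ⟨X, fun i => ?_, le_iff.mpr ?_, hXN, fun i hi => ?_⟩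
  · exact posSemidef_of_posSemidef_jordanMul hσ (hX i) (hXN i ▸ hN i)
  · refine posSemidef_of_posSemidef_jordanMul hσ (Submodule.sub_mem _
      (self_mem_supportedHermitian hσ.1) (Submodule.sum_mem _ fun i _ => hX i)) ?_
    simpa only [map_sub, map_sum, hXN, jordanMul_self] using le_iff.mp h
  · exact injOn_jordanMul hσ (hX i) (Submodule.zero_mem _) (by rw [hXN, hi, map_zero])

theorem re_trace_mul_jordanMul [DecidableEq n] (hP : P.IsHermitian) (hσ : σ.IsHermitian)
    (hX : X.IsHermitian) : RCLike.re (P * jordanMul σ X).trace = traceForm P 1 σ X := by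
  have h := traceForm_symm hP isHermitian_one hσ hX
  simp only [traceForm_apply, Matrix.one_mul, Matrix.mul_assoc] at h ⊢
  simp only [jordanMul_apply, Matrix.mul_smul, Matrix.mul_add, trace_smul, trace_add,
    RCLike.smul_re, map_add, h]
  ring

end JordanProduct
section ProjectionBound
open scoped MatrixOrder
variable {𝕜 n α β : Type*} [RCLike 𝕜] [Fintype n] [DecidableEq n] [Fintype α] [Fintype β]

theorem sq_sum_re_trace_add_mul_le {P : α → Matrix n n 𝕜} {Q : β → Matrix n n 𝕜}
    {N : α → β → Matrix n n 𝕜} {σ : Matrix n n 𝕜} {D : α → β → Prop} [∀ a b, Decidable (D a b)]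
    (hP : ∀ a, (P a).PosSemidef) (hP1 : ∑ a, P a = 1)
    (hQ : ∀ b, (Q b).PosSemidef) (hQ1 : ∑ b, Q b = 1)
    (hσ : σ.PosSemidef) (hσ1 : traceForm 1 1 σ σ = 1)
    (hN : ∀ a b, (N a b).PosSemidef) (hND : ∀ a b, ¬ D a b → N a b = 0)
    (hNσ : ∑ a, ∑ b, N a b ≤ σ * σ) :
    ((∑ a, ∑ b, RCLike.re ((P a + Q b) * N a b).trace) / 2) ^ 2 ≤
      (1 + ∑ a, ∑ b, if D a b then traceForm (P a) (Q b) σ σ else 0) / 2 := by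
  obtain ⟨X, hX, hXσ, hXN, hX0⟩ := exists_posSemidef_jordanMul_eq
    (N := fun i : α × β => N i.1 i.2) hσ (fun i => hN i.1 i.2)
    (by rwa [Fintype.sum_prod_type])
  rw [Fintype.sum_prod_type] at hXσ
  have hcell (a : α) (b : β) : RCLike.re ((P a + Q b) * N a b).trace =
      traceForm (P a) 1 σ (X (a, b)) + traceForm 1 (Q b) σ (X (a, b)) := by
    rw [← hXN (a, b), Matrix.add_mul, trace_add, map_add,
      re_trace_mul_jordanMul (hP a).1 hσ.1 (hX (a, b)).1,
      re_trace_mul_jordanMul (hQ b).1 hσ.1 (hX (a, b)).1, traceForm_comm (Q b),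
      traceForm_symm isHermitian_one (hQ b).1 (hX (a, b)).1 hσ.1]
  have hnorm : traceForm 1 1 (∑ a, ∑ b, X (a, b)) (∑ a, ∑ b, X (a, b)) ≤ 1 :=
    hσ1 ▸ traceForm_self_mono .one
      (posSemidef_sum _ fun a _ => posSemidef_sum _ fun b _ => hX (a, b)) hXσ
  set S := ∑ a, ∑ b, RCLike.re ((P a + Q b) * N a b).trace
  have hbound := two_mul_sum_traceForm_marginal_le (X := fun a b => X (a, b)) (D := D) hP hP1 hQ
    hQ1 (fun a b => hX (a, b)) (fun a b hab => hX0 (a, b) (hND a b hab)) hσ.1 (S / 2)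
  simp only [← hcell, hσ1] at hbound
  linarith [mul_le_mul_of_nonneg_left hnorm (sq_nonneg (S / 2))]

end ProjectionBound

section NonlocalGame
variable {IA IB OA OB I O : Type}

theorem IsDist.sum_mul_le_one [Fintype IA] [Fintype IB] {p w : IA → IB → ℝ} (hp : IsDist p)
    (hw : ∀ x y, w x y ≤ 1) : ∑ x, ∑ y, p x y * w x y ≤ 1 :=
  calc _ ≤ ∑ x, ∑ y, p x y := Finset.sum_le_sum fun x _ => Finset.sum_le_sum fun y _ =>
        mul_le_of_le_one_right (hp.1 x y) (hw x y)
    _ = 1 := hp.2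

theorem IsDist.sq_sum_mul_le [Fintype IA] [Fintype IB] {p : IA → IB → ℝ} (hp : IsDist p)
    (w : IA → IB → ℝ) : (∑ x, ∑ y, p x y * w x y) ^ 2 ≤ ∑ x, ∑ y, p x y * w x y ^ 2 := by
  simpa only [Fintype.sum_prod_type] using Real.pow_arith_mean_le_arith_mean_pow_of_even
    Finset.univ (fun q : IA × IB => p q.1 q.2) (fun q => w q.1 q.2) (fun q _ => hp.1 q.1 q.2)
    (by rw [Fintype.sum_prod_type, hp.2]) even_two

theorem IsPOVM.transpose [Fintype O] {d : ℕ} {A : O → Matrix (Fin d) (Fin d) ℂ}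
    (hA : IsPOVM A) : IsPOVM fun a => (A a)ᵀ :=
  ⟨fun a => (hA.1 a).transpose, by rw [← transpose_sum, hA.2, transpose_one]⟩

theorem winProb_le_one [Fintype IA] [Fintype IB] [Fintype OA] [Fintype OB]
    {G : NonlocalGame IA IB OA OB} (hG : IsDist G.prob) {dA dB : ℕ}
    {A : IA → OA → Matrix (Fin dA) (Fin dA) ℂ} {B : IB → OB → Matrix (Fin dB) (Fin dB) ℂ}
    {M : Matrix (Fin dA) (Fin dB) ℂ} (hA : ∀ x, IsPOVM (A x)) (hB : ∀ y, IsPOVM (B y))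
    (hM : (Mᴴ * M).trace = 1) : winProb G A B M ≤ 1 := by
  refine hG.sum_mul_le_one fun x y => ?_
  calc _ ≤ ∑ a, ∑ b, (Mᴴ * A x a * M * (B y b)ᵀ).trace.re := by
        gcongr with a _ b
        split_ifs
        · exact le_rfl
        · exact re_trace_mul_nonneg (((hA x).1 a).conjTranspose_mul_mul_same M)
            ((hB y).1 b).transpose
    _ = 1 := by
        simp only [← Complex.re_sum, ← trace_sum, ← Matrix.mul_sum, ← Matrix.sum_mul,
          ← transpose_sum, (hA x).2, (hB y).2, transpose_one, Matrix.mul_one, hM, Complex.one_re]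

theorem winProb_le_qValue [Fintype IA] [Fintype IB] [Fintype OA] [Fintype OB]
    {G : NonlocalGame IA IB OA OB} (hG : IsDist G.prob) {dA dB : ℕ}
    {A : IA → OA → Matrix (Fin dA) (Fin dA) ℂ} {B : IB → OB → Matrix (Fin dB) (Fin dB) ℂ}
    {M : Matrix (Fin dA) (Fin dB) ℂ} (hA : ∀ x, IsPOVM (A x)) (hB : ∀ y, IsPOVM (B y))
    (hM : (Mᴴ * M).trace = 1) : winProb G A B M ≤ qValue G := by
  refine le_csSup ⟨1, ?_⟩ ⟨dA, dB, A, B, M, hA, hB, hM, rfl⟩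
  rintro _ ⟨_, _, _, _, _, hA', hB', hM', rfl⟩
  exact winProb_le_one hG hA' hB' hM'

/-- Bob's unnormalized (transposed) state after Alice answers `(a, b)` to `(x, y)` in the
projection game, set to `0` when `G` rejects these answers. -/
def acceptedState (G : NonlocalGame I I O O) {dA dB : ℕ}
    (A : I × I → O × O → Matrix (Fin dA) (Fin dA) ℂ) (M : Matrix (Fin dA) (Fin dB) ℂ)
    (x y : I) (a b : O) : Matrix (Fin dB) (Fin dB) ℂ :=
  if G.D x y a b then Mᴴ * A (x, y) (a, b) * M else 0

theorem posSemidef_acceptedState [Fintype O] (G : NonlocalGame I I O O) {dA dB : ℕ}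
    {A : I × I → O × O → Matrix (Fin dA) (Fin dA) ℂ} (hA : ∀ q, IsPOVM (A q))
    (M : Matrix (Fin dA) (Fin dB) ℂ) (x y : I) (a b : O) :
    (acceptedState G A M x y a b).PosSemidef := by
  unfold acceptedState
  split_ifs
  · exact ((hA (x, y)).1 (a, b)).conjTranspose_mul_mul_same M
  · exact .zero

open scoped MatrixOrder in
theorem sum_acceptedState_le [Fintype O] (G : NonlocalGame I I O O) {dA dB : ℕ}
    {A : I × I → O × O → Matrix (Fin dA) (Fin dA) ℂ} (hA : ∀ q, IsPOVM (A q))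
    (M : Matrix (Fin dA) (Fin dB) ℂ) (x y : I) :
    ∑ a, ∑ b, acceptedState G A M x y a b ≤ Mᴴ * M := by
  have hA1 : ∑ a, ∑ b, A (x, y) (a, b) = 1 := by rw [← Fintype.sum_prod_type', (hA (x, y)).2]
  calc _ ≤ ∑ a, ∑ b, Mᴴ * A (x, y) (a, b) * M := by
        gcongr with a _ b
        unfold acceptedState
        split_ifs
        · exact le_rfl
        · exact (((hA (x, y)).1 (a, b)).conjTranspose_mul_mul_same M).nonneg
    _ = Mᴴ * M := by simp only [← Matrix.sum_mul, ← Matrix.mul_sum, hA1, Matrix.mul_one]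

theorem winProb_projGame [Fintype I] [DecidableEq I] [Fintype O] [DecidableEq O]
    (G : NonlocalGame I I O O) {dA dB : ℕ} (A : I × I → O × O → Matrix (Fin dA) (Fin dA) ℂ)
    (B : I × Bool → O → Matrix (Fin dB) (Fin dB) ℂ) (M : Matrix (Fin dA) (Fin dB) ℂ) :
    winProb (projGame G) A B M = ∑ x, ∑ y, G.prob x y * ((∑ a, ∑ b, RCLike.re
      (((B (x, false) a)ᵀ + (B (y, true) b)ᵀ) * acceptedState G A M x y a b).trace) / 2) := by
  have hcell (x y : I) (a b : O) : RCLike.re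
      (((B (x, false) a)ᵀ + (B (y, true) b)ᵀ) * acceptedState G A M x y a b).trace =
      (if G.D x y a b then (Mᴴ * A (x, y) (a, b) * M * (B (x, false) a)ᵀ).trace.re else 0) +
      (if G.D x y a b then (Mᴴ * A (x, y) (a, b) * M * (B (y, true) b)ᵀ).trace.re else 0) := by
    rw [trace_mul_comm]
    unfold acceptedState
    split_ifs <;> simp [Matrix.mul_add]
  simp only [hcell, winProb, projGame, Fintype.sum_prod_type, Fintype.sum_bool]
  refine Finset.sum_congr rfl fun x _ => Finset.sum_congr rfl fun y _ => ?_
  simp [Finset.sum_add_distrib, ite_and]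
  ring

/-- The strategy behind this bound shares the state with coefficient matrix `σ`; Alice measures
`P x` and Bob measures `(Q y)ᵀ`. -/
theorem sum_traceForm_le_qValue [Fintype I] [Fintype O] {G : NonlocalGame I I O O}
    (hG : IsDist G.prob) {d : ℕ} {P Q : I → O → Matrix (Fin d) (Fin d) ℂ}
    {σ : Matrix (Fin d) (Fin d) ℂ} (hP : ∀ x, IsPOVM (P x)) (hQ : ∀ y, IsPOVM (Q y))
    (hσ : σ.IsHermitian) (hσ1 : (σ * σ).trace = 1) :
    ∑ x, ∑ y, G.prob x y * ∑ a, ∑ b, (if G.D x y a b then traceForm (P x a) (Q y b) σ σ else 0) ≤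
      qValue G := by
  have h := winProb_le_qValue hG hP (fun y => (hQ y).transpose) (M := σ) (by rwa [hσ.eq])
  simpa only [winProb, hσ.eq, transpose_transpose, traceForm_apply, RCLike.re_eq_complex_re,
    Matrix.mul_assoc, trace_mul_comm σ] using h

open scoped MatrixOrder in
theorem sq_winProb_projGame_le [Fintype I] [DecidableEq I] [Fintype O] [DecidableEq O]
    {G : NonlocalGame I I O O} (hG : IsDist G.prob) {dA dB : ℕ}
    {A : I × I → O × O → Matrix (Fin dA) (Fin dA) ℂ}
    {B : I × Bool → O → Matrix (Fin dB) (Fin dB) ℂ} {M : Matrix (Fin dA) (Fin dB) ℂ}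
    (hA : ∀ q, IsPOVM (A q)) (hB : ∀ z, IsPOVM (B z)) (hM : (Mᴴ * M).trace = 1) :
    winProb (projGame G) A B M ^ 2 ≤ (1 + qValue G) / 2 := by
  set σ := CFC.sqrt (Mᴴ * M)
  have hσ : σ.PosSemidef := (CFC.sqrt_nonneg _).posSemidef
  have hσM : σ * σ = Mᴴ * M :=
    CFC.sqrt_mul_sqrt_self _ (posSemidef_conjTranspose_mul_self M).nonneg
  have hP (z : I × Bool) : IsPOVM fun c => (B z c)ᵀ := (hB z).transpose
  let v (x y : I) : ℝ := ∑ a, ∑ b,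
    if G.D x y a b then traceForm (B (x, false) a)ᵀ (B (y, true) b)ᵀ σ σ else 0
  have hv : ∑ x, ∑ y, G.prob x y * v x y ≤ qValue G :=
    sum_traceForm_le_qValue hG (fun x => hP (x, false)) (fun y => hP (y, true)) hσ.1 (hσM ▸ hM)
  rw [winProb_projGame]
  refine (hG.sq_sum_mul_le _).trans ?_
  calc _ ≤ ∑ x, ∑ y, G.prob x y * ((1 + v x y) / 2) := by
        gcongr with x _ y
        · exact hG.1 x y
        refine sq_sum_re_trace_add_mul_le (hP (x, false)).1 (hP (x, false)).2 (hP (y, true)).1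
          (hP (y, true)).2 hσ ?_ (posSemidef_acceptedState G hA M x y) (fun a b h => if_neg h)
          (hσM ▸ sum_acceptedState_le G hA M x y)
        simp [traceForm_apply, hσM, hM]
    _ = (1 + ∑ x, ∑ y, G.prob x y * v x y) / 2 := by
        simp only [mul_div_assoc', mul_add, mul_one, ← Finset.sum_div, Finset.sum_add_distrib,
          hG.2]
    _ ≤ _ := by gcongr

end NonlocalGame

/-- `ω_q(G^proj) ≤ √((1 + ω_q(G))/2)`. -/
theorem stmt_13 {I O : Type} [Fintype I] [DecidableEq I] [Fintype O] [DecidableEq O]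
    (G : NonlocalGame I I O O) (hG : IsDist G.prob) :
    qValue (projGame G) ≤ Real.sqrt ((1 + qValue G) / 2) := by
  refine Real.sSup_le ?_ (Real.sqrt_nonneg _)
  rintro w ⟨dA, dB, A, B, M, hA, hB, hM, rfl⟩
  exact Real.le_sqrt_of_sq_le (sq_winProb_projGame_le hG hA hB hM)
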